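/- There is a universal constant c₂ > 0 such that the following holds. Let ε ∈ (0,1), n ≥ 2, and let q be an integer with q ≥ c₂ k² (log n)/ε⁴. Then with probability at least 1 − n^{−3} over the random samples, simultaneously for all k-clusterings C' of V and all i, j ∈ [k]: |F_{i,j}(C') − F̂_{i,j}(C')| ≤ ε·|C_{ij} × (C_i \ C_{ij})|. -/

import Mathlib

open Finset

attribute [local instance] Classical.propDecidable

/-- A `k`-clustering of `V` is encoded by its cluster-assignment function `Cl : V → Fin k`;
two points are in the same cluster iff they have the same assigned index.
`cluster Cl i` is the `i`-th cluster `C_i`, as a finset. -/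
noncomputable def cluster {V : Type*} [Fintype V] {k : ℕ} (Cl : V → Fin k) (i : Fin k) : Finset V :=
  Finset.univ.filter fun v => Cl v = i

/-- `cost_{u,v}(C) = 1[(u,v) ∈ E]·1[u ≢_C v] + 1[(u,v) ∉ E]·1[u ≡_C v]`. -/
noncomputable def costuv {V : Type*} {k : ℕ} (G : SimpleGraph V) (Cl : V → Fin k) (u v : V) : ℝ :=
  (if G.Adj u v then (if Cl u = Cl v then 0 else 1) else (if Cl u = Cl v then 1 else 0))

/-- `cost(C)`: the number of unordered pairs of distinct points on which the clustering
`Cl` disagrees with the graph `G` (each unordered pair counted once, via half the sum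
over ordered pairs). -/
noncomputable def cost {V : Type*} [Fintype V] {k : ℕ} (G : SimpleGraph V) (Cl : V → Fin k) : ℝ :=
  (1 / 2) * ∑ u : V, ∑ v : V, if u ≠ v then costuv G Cl u v else 0

/-- The disagreement distance between two `k`-clusterings:
`d(C,C') = (1/2) Σ_{u ≠ v} (1[u ≡_{C'} v]·1[u ≢_C v] + 1[u ≡_C v]·1[u ≢_{C'} v])`. -/
noncomputable def dd {V : Type*} [Fintype V] {k : ℕ} (Cl Cl' : V → Fin k) : ℝ :=
  (1 / 2) * ∑ u : V, ∑ v : V, if u ≠ v then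
      ((if Cl' u = Cl' v ∧ ¬Cl u = Cl v then (1 : ℝ) else 0) +
        (if Cl u = Cl v ∧ ¬Cl' u = Cl' v then (1 : ℝ) else 0))
    else 0

/-- `f_{u,v}(C') = cost_{u,v}(C') - cost_{u,v}(C)`. -/
noncomputable def fuv {V : Type*} {k : ℕ} (G : SimpleGraph V) (Cl Cl' : V → Fin k) (u v : V) : ℝ :=
  costuv G Cl' u v - costuv G Cl u v

/-- The exponential moment of a sum of independent uniform samples, bounded factor by factor. -/
lemma sum_exp_sum_sample_le {V : Type*} [Fintype V] {T : V → Type*} [∀ u, Fintype (T u)]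
    (q : ℕ) (Y : ∀ u, T u → ℝ) (κ : V → ℝ)
    (hY : ∀ u, ∑ x, Real.exp (Y u x) ≤ Real.exp (κ u) * Fintype.card (T u)) :
    ∑ ω : ∀ u, Fin q → T u, Real.exp (∑ u, ∑ s, Y u (ω u s)) ≤
      Real.exp (q * ∑ u, κ u) * Fintype.card (∀ u, Fin q → T u) := by
  have h1 : ∑ ω : ∀ u, Fin q → T u, Real.exp (∑ u, ∑ s, Y u (ω u s)) =
      ∏ u, (∑ x, Real.exp (Y u x)) ^ q := by
    have h2 : ∀ u, (∑ x, Real.exp (Y u x)) ^ q =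
        ∑ p : Fin q → T u, ∏ s, Real.exp (Y u (p s)) := fun u => by
      have := Finset.prod_univ_sum (fun _ : Fin q => (univ : Finset (T u)))
        (fun _ x => Real.exp (Y u x))
      simpa using this
    simp_rw [h2, Real.exp_sum]
    have := Finset.prod_univ_sum (fun u : V => (univ : Finset (Fin q → T u)))
      (fun u p => ∏ s, Real.exp (Y u (p s)))
    rw [this]
    simp
  rw [h1, Finset.mul_sum, Real.exp_sum, Fintype.card_pi]
  push_cast
  rw [← Finset.prod_mul_distrib]
  refine Finset.prod_le_prod (fun u _ => by positivity) fun u _ => ?_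
  rw [Fintype.card_fun, Fintype.card_fin, Nat.cast_pow, Real.exp_nat_mul, ← mul_pow]
  exact pow_le_pow_left₀ (by positivity) (hY u) q

/-- Markov's inequality for the exponential of a function on a finite type. -/
lemma card_lt_le_sum_exp {Ω : Type*} [Fintype Ω] (L : Ω → ℝ) (δ : ℝ) :
    ((univ.filter fun ω => δ < L ω).card : ℝ) ≤ Real.exp (-δ) * ∑ ω, Real.exp (L ω) := by
  rw [Finset.card_eq_sum_ones, Nat.cast_sum, Finset.mul_sum, Finset.sum_filter]
  refine Finset.sum_le_sum fun ω _ => ?_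
  rw [← Real.exp_add]
  split_ifs with h
  · rw [Nat.cast_one]
    exact Real.one_le_exp (by linarith)
  · positivity

/-- A Bernstein-type upper tail bound for sums of independent uniform samples. -/
lemma card_sample_upper_tail_le {V : Type*} [Fintype V] {T : V → Type*} [∀ u, Fintype (T u)]
    (q : ℕ) (X : ∀ u, T u → ℝ) (μ w : V → ℝ) (lam δ : ℝ) (hlam : 0 ≤ lam) (hlam1 : lam ≤ 1)
    (hX : ∀ u x, |X u x| ≤ 1) (hμ : ∀ u, ∑ x, X u x = μ u * Fintype.card (T u))
    (hw : ∀ u, ∑ x, X u x ^ 2 ≤ w u * Fintype.card (T u)) :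
    ((univ.filter fun ω : ∀ u, Fin q → T u =>
        δ < (∑ u, ∑ s, X u (ω u s)) - q * ∑ u, μ u).card : ℝ) ≤
      Real.exp (-(lam * δ) + lam ^ 2 * (q * ∑ u, w u)) *
        Fintype.card (∀ u, Fin q → T u) := by
  rcases hlam.eq_or_lt with rfl | hpos
  · simp only [zero_mul, neg_zero, ne_eq, OfNat.ofNat_ne_zero, not_false_eq_true, zero_pow,
      add_zero, Real.exp_zero, one_mul, Nat.cast_le]
    exact Finset.card_le_univ _
  have key := sum_exp_sum_sample_le q (fun u x => lam * X u x)
    (fun u => lam * μ u + lam ^ 2 * w u) (fun u => by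
      calc ∑ x, Real.exp (lam * X u x)
          ≤ ∑ x, (1 + lam * X u x + lam ^ 2 * X u x ^ 2) := by
            refine Finset.sum_le_sum fun x _ => ?_
            have h := Real.abs_exp_sub_one_sub_id_le (x := lam * X u x) (by
              rw [abs_mul, abs_of_nonneg hlam]
              exact mul_le_one₀ hlam1 (abs_nonneg _) (hX u x))
            have := (abs_le.1 h).2
            nlinarith
        _ = Fintype.card (T u) + lam * ∑ x, X u x + lam ^ 2 * ∑ x, X u x ^ 2 := by
            simp [Finset.sum_add_distrib, Finset.mul_sum]
        _ ≤ (lam * μ u + lam ^ 2 * w u + 1) * Fintype.card (T u) := by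
            have := mul_le_mul_of_nonneg_left (hw u) (sq_nonneg lam)
            rw [hμ u]
            linarith
        _ ≤ _ := by gcongr; exact Real.add_one_le_exp _)
  have hM := card_lt_le_sum_exp
    (fun ω : ∀ u, Fin q → T u => ∑ u, ∑ s, lam * X u (ω u s)) (lam * δ + q * ∑ u, lam * μ u)
  have heq : (univ.filter fun ω : ∀ u, Fin q → T u =>
        δ < (∑ u, ∑ s, X u (ω u s)) - q * ∑ u, μ u) =
      univ.filter fun ω : ∀ u, Fin q → T u =>
        lam * δ + q * ∑ u, lam * μ u < ∑ u, ∑ s, lam * X u (ω u s) := by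
    refine Finset.filter_congr fun ω _ => ?_
    simp_rw [← Finset.mul_sum]
    rw [← mul_lt_mul_iff_right₀ hpos]
    constructor <;> intro h <;> linarith
  rw [heq]
  refine hM.trans ((mul_le_mul_of_nonneg_left key (Real.exp_nonneg _)).trans (le_of_eq ?_))
  rw [← mul_assoc, ← Real.exp_add]
  congr 2
  simp_rw [Finset.sum_add_distrib, ← Finset.mul_sum]
  ring

/-- A Bernstein-type two-sided tail bound for sums of independent uniform samples. -/
lemma card_sample_abs_tail_le {V : Type*} [Fintype V] {T : V → Type*} [∀ u, Fintype (T u)]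
    (q : ℕ) (X : ∀ u, T u → ℝ) (μ w : V → ℝ) (lam δ : ℝ) (hlam : 0 ≤ lam) (hlam1 : lam ≤ 1)
    (hX : ∀ u x, |X u x| ≤ 1) (hμ : ∀ u, ∑ x, X u x = μ u * Fintype.card (T u))
    (hw : ∀ u, ∑ x, X u x ^ 2 ≤ w u * Fintype.card (T u)) :
    ((univ.filter fun ω : ∀ u, Fin q → T u =>
        δ < |(∑ u, ∑ s, X u (ω u s)) - q * ∑ u, μ u|).card : ℝ) ≤
      2 * (Real.exp (-(lam * δ) + lam ^ 2 * (q * ∑ u, w u)) *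
        Fintype.card (∀ u, Fin q → T u)) := by
  have h1 := card_sample_upper_tail_le q X μ w lam δ hlam hlam1 hX hμ hw
  have h2 := card_sample_upper_tail_le q (fun u x => -X u x) (fun u => -μ u) w lam δ hlam hlam1
    (by simpa using hX) (by simpa using hμ) (by simpa using hw)
  have h3 : (univ.filter fun ω : ∀ u, Fin q → T u =>
        δ < |(∑ u, ∑ s, X u (ω u s)) - q * ∑ u, μ u|) ⊆
      (univ.filter fun ω : ∀ u, Fin q → T u =>
        δ < (∑ u, ∑ s, X u (ω u s)) - q * ∑ u, μ u) ∪
      (univ.filter fun ω : ∀ u, Fin q → T u =>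
        δ < (∑ u, ∑ s, -X u (ω u s)) - q * ∑ u, -μ u) := by
    intro ω
    simp only [Finset.mem_filter, Finset.mem_univ, true_and, Finset.mem_union, lt_abs,
      Finset.sum_neg_distrib]
    rintro (h | h)
    · exact Or.inl h
    · right; linarith
  have h4 : ((_ : ℕ) : ℝ) ≤ _ :=
    Nat.cast_le.2 ((Finset.card_le_card h3).trans (Finset.card_union_le _ _))
  push_cast at h4
  linarith

/-- The sign with which a pair of points separated by a new clustering changes its cost. -/
noncomputable def adjSign {V : Type*} (G : SimpleGraph V) (u v : V) : ℝ :=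
  if G.Adj u v then 1 else -1

lemma fuv_eq_adjSign {V : Type*} {k : ℕ} (G : SimpleGraph V) (Cl Cl' : V → Fin k) {u v : V}
    (h : Cl u = Cl v) (h' : Cl' u ≠ Cl' v) : fuv G Cl Cl' u v = adjSign G u v := by
  unfold fuv costuv adjSign
  split_ifs <;> simp_all

/-- The error of the sampled estimate of the cut between `A` and `D \ A`. -/
noncomputable def cutError {V : Type*} {T : V → V → Prop} (q : ℕ)
    (G : SimpleGraph V) (D A : Finset V) (ω : ∀ u : V, Fin q → {v : V // T u v}) : ℝ :=
  |(∑ u ∈ A, ∑ v ∈ D \ A, adjSign G u v) - (D.card : ℝ) / (q : ℝ) *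
    ∑ u ∈ A, ∑ s : Fin q, if (ω u s).1 ∈ D \ A then adjSign G u (ω u s).1 else 0|

/-- Probability bound for the sampled cut of one fixed subset of a cluster. -/
lemma card_cutError_gt_le {V : Type*} [Fintype V] {k : ℕ} (q : ℕ) (hq : 0 < q)
    (G : SimpleGraph V) (Cl : V → Fin k) (i : Fin k) (ε : ℝ) (hε : 0 < ε) (hε1 : ε < 1)
    (A : Finset V) (hA : A ⊆ cluster Cl i) (hne : A.Nonempty) :
    ((univ.filter fun ω : ∀ u : V, Fin q → {v : V // Cl v = Cl u} =>
        ε * ((A.card : ℝ) * ((cluster Cl i \ A).card : ℝ)) <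
          cutError q G (cluster Cl i) A ω).card : ℝ) ≤
      2 * (Real.exp (-(ε ^ 2 * q / 4 * (A.card * (cluster Cl i \ A).card /
          (cluster Cl i).card))) *
        Fintype.card (∀ u : V, Fin q → {v : V // Cl v = Cl u})) := by
  set D := cluster Cl i with hD
  set B := D \ A with hB
  have hm : (0 : ℝ) < D.card := by exact_mod_cast (hne.mono hA).card_pos
  have hqr : (0 : ℝ) < q := by exact_mod_cast hq
  have hcl : ∀ u ∈ A, Cl u = i := fun u hu => by simpa [hD, cluster] using hA hu
  have hcard : ∀ u ∈ A, Fintype.card {v : V // Cl v = Cl u} = D.card := fun u hu => by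
    rw [Fintype.card_subtype, hcl u hu, hD, cluster]
  have hsum : ∀ u ∈ A, ∀ φ : V → ℝ,
      ∑ x : {v : V // Cl v = Cl u}, (if x.1 ∈ B then φ x.1 else 0) = ∑ v ∈ B, φ v := by
    intro u hu φ
    rw [← Finset.sum_subtype D (by simp [hD, cluster, hcl u hu])
      (fun v => if v ∈ B then φ v else 0), ← Finset.sum_filter]
    congr 1
    ext v
    simp only [Finset.mem_filter, hB, Finset.mem_sdiff]
    tauto
  have main := card_sample_abs_tail_le (T := fun u => {v : V // Cl v = Cl u}) q
    (fun u x => if u ∈ A then (if x.1 ∈ B then adjSign G u x.1 else 0) else 0)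
    (fun u => if u ∈ A then (∑ v ∈ B, adjSign G u v) / D.card else 0)
    (fun u => if u ∈ A then B.card / D.card else 0)
    (ε / 2) (ε * (A.card * B.card) * q / D.card) (by linarith) (by linarith)
    (by intro u x; unfold adjSign; split_ifs <;> simp)
    (by
      intro u
      split_ifs with hu
      · rw [hsum u hu, hcard u hu]; field_simp
      · simp)
    (by
      intro u
      split_ifs with hu
      · rw [hcard u hu]
        have : ∀ x : {v : V // Cl v = Cl u},
            (if x.1 ∈ B then adjSign G u x.1 else 0) ^ 2 = if x.1 ∈ B then (1 : ℝ) else 0 := by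
          intro x; unfold adjSign; split_ifs <;> simp
        simp_rw [this]
        rw [hsum u hu (fun _ => 1)]
        simp only [Finset.sum_const, nsmul_eq_mul, mul_one]
        field_simp
        exact le_rfl
      · simp)
  have hsub : (univ.filter fun ω : ∀ u : V, Fin q → {v : V // Cl v = Cl u} =>
        ε * ((A.card : ℝ) * (B.card : ℝ)) < cutError q G D A ω) ⊆
      (univ.filter fun ω : ∀ u : V, Fin q → {v : V // Cl v = Cl u} =>
        ε * (A.card * B.card) * q / D.card <
        |(∑ u, ∑ s, if u ∈ A then (if (ω u s).1 ∈ B then adjSign G u (ω u s).1 else 0) else 0)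
          - q * ∑ u, if u ∈ A then (∑ v ∈ B, adjSign G u v) / (D.card : ℝ) else 0|) := by
    intro ω
    simp only [Finset.mem_filter, Finset.mem_univ, true_and]
    intro h
    have e1 : (∑ u, ∑ s, if u ∈ A then
          (if (ω u s).1 ∈ B then adjSign G u (ω u s).1 else 0) else 0) =
        ∑ u ∈ A, ∑ s, if (ω u s).1 ∈ B then adjSign G u (ω u s).1 else 0 := by
      rw [← Finset.sum_filter_add_sum_filter_not univ (· ∈ A)]
      rw [Finset.sum_eq_zero (s := univ.filter fun u => ¬u ∈ A)
        (fun u hu => by simp [(Finset.mem_filter.1 hu).2]), add_zero]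
      rw [Finset.filter_mem_eq_inter, Finset.univ_inter]
      exact Finset.sum_congr rfl fun u hu => by simp [hu]
    have e2 : (∑ u, if u ∈ A then (∑ v ∈ B, adjSign G u v) / (D.card : ℝ) else 0) =
        (∑ u ∈ A, ∑ v ∈ B, adjSign G u v) / D.card := by
      rw [← Finset.sum_filter, Finset.filter_mem_eq_inter, Finset.univ_inter, Finset.sum_div]
    rw [e1, e2]
    unfold cutError at h
    rw [← hB] at h
    set F := ∑ u ∈ A, ∑ v ∈ B, adjSign G u v
    set W := ∑ u ∈ A, ∑ s, if (ω u s).1 ∈ B then adjSign G u (ω u s).1 else 0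
    have e3 : W - q * (F / D.card) = -(q / D.card * (F - D.card / q * W)) := by
      field_simp
      ring
    rw [e3, abs_neg, abs_mul, abs_of_pos (div_pos hqr hm)]
    have := mul_lt_mul_of_pos_left h (div_pos hqr hm)
    refine lt_of_eq_of_lt ?_ this
    ring
  refine (Nat.cast_le.2 (Finset.card_le_card hsub)).trans (main.trans (le_of_eq ?_))
  congr 3
  rw [← Finset.sum_filter, Finset.filter_mem_eq_inter, Finset.univ_inter, Finset.sum_const,
    nsmul_eq_mul]
  ring

/-- The tail exponent dominates the smaller side of a cut. -/
lemma exp_cut_le {a b q ε ℓ : ℝ} {r t : ℕ} (ha : a = r) (hb : b = t) (hpos : 0 < a + b)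
    (hq : 64 * ℓ ≤ ε ^ 2 * q) (hl : 0 ≤ ℓ) :
    Real.exp (-(ε ^ 2 * q / 4 * (a * b / (a + b)))) ≤
      Real.exp (-(8 * ℓ)) ^ r + Real.exp (-(8 * ℓ)) ^ t := by
  have ha0 : 0 ≤ a := ha ▸ Nat.cast_nonneg _
  have hb0 : 0 ≤ b := hb ▸ Nat.cast_nonneg _
  rw [← Real.exp_nat_mul, ← Real.exp_nat_mul, ← ha, ← hb]
  have hX : 0 ≤ a * b / (a + b) := by positivity
  have h1 := mul_le_mul_of_nonneg_right hq hX
  rcases le_total a b with h | h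
  · have : a / 2 ≤ a * b / (a + b) := by
      rw [div_le_div_iff₀ two_pos hpos]; nlinarith
    refine le_add_of_le_of_nonneg (Real.exp_le_exp.2 ?_) (Real.exp_nonneg _)
    nlinarith [mul_le_mul_of_nonneg_left this hl]
  · have : b / 2 ≤ a * b / (a + b) := by
      rw [div_le_div_iff₀ two_pos hpos]; nlinarith
    refine le_add_of_nonneg_of_le (Real.exp_nonneg _) (Real.exp_le_exp.2 ?_)
    nlinarith [mul_le_mul_of_nonneg_left this hl]

/-- The weighted count of nonempty subsets of `D`. -/
lemma sum_pow_card_nonempty_le {V : Type*} (D : Finset V) (x : ℝ) (hx : 0 ≤ x)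
    (hDx : D.card * x ≤ 1) :
    ∑ A ∈ D.powerset.filter (·.Nonempty), x ^ A.card ≤ 2 * (D.card * x) := by
  have h1 : ∑ A ∈ D.powerset, x ^ A.card = (x + 1) ^ D.card := by
    simpa using (Finset.sum_pow_mul_eq_add_pow x 1 D)
  have h2 : D.powerset.filter (·.Nonempty) = D.powerset.erase ∅ := by
    ext A; simp [Finset.nonempty_iff_ne_empty, and_comm]
  have h3 := Finset.add_sum_erase D.powerset (fun A => x ^ A.card) (Finset.empty_mem_powerset D)
  rw [h1] at h3
  rw [h2]
  simp only [Finset.card_empty, pow_zero] at h3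
  have h4 : (x + 1) ^ D.card ≤ Real.exp (D.card * x) := by
    rw [Real.exp_nat_mul]
    exact pow_le_pow_left₀ (by positivity) (Real.add_one_le_exp x) _
  have h0 : 0 ≤ (D.card : ℝ) * x := by positivity
  have h5 := (abs_le.1 (Real.abs_exp_sub_one_sub_id_le (x := D.card * x)
    (by rwa [abs_of_nonneg h0]))).2
  nlinarith

/-- Union bound over all subsets of one cluster. -/
lemma card_exists_cutError_gt_le {V : Type*} [Fintype V] {k : ℕ} (q : ℕ) (hq : 0 < q)
    (G : SimpleGraph V) (Cl : V → Fin k) (i : Fin k) (ε ℓ : ℝ) (hε : 0 < ε) (hε1 : ε < 1)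
    (hl : 0 ≤ ℓ) (hql : 64 * ℓ ≤ ε ^ 2 * q)
    (hx : (cluster Cl i).card * Real.exp (-(8 * ℓ)) ≤ 1) :
    ((univ.filter fun ω : ∀ u : V, Fin q → {v : V // Cl v = Cl u} =>
        ∃ A ⊆ cluster Cl i, ε * ((A.card : ℝ) * ((cluster Cl i \ A).card : ℝ)) <
          cutError q G (cluster Cl i) A ω).card : ℝ) ≤
      8 * ((cluster Cl i).card * Real.exp (-(8 * ℓ))) *
        Fintype.card (∀ u : V, Fin q → {v : V // Cl v = Cl u}) := by
  set D := cluster Cl i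
  set x := Real.exp (-(8 * ℓ))
  set N : ℝ := ((Fintype.card (∀ u : V, Fin q → {v : V // Cl v = Cl u}) : ℕ) : ℝ)
  set P := D.powerset.filter fun A => A.Nonempty ∧ (D \ A).Nonempty with hP
  have hsub : (univ.filter fun ω : ∀ u : V, Fin q → {v : V // Cl v = Cl u} =>
        ∃ A ⊆ D, ε * ((A.card : ℝ) * ((D \ A).card : ℝ)) < cutError q G D A ω) ⊆
      P.biUnion fun A => univ.filter fun ω : ∀ u : V, Fin q → {v : V // Cl v = Cl u} =>
        ε * ((A.card : ℝ) * ((D \ A).card : ℝ)) < cutError q G D A ω := by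
    intro ω
    simp only [Finset.mem_filter, Finset.mem_univ, true_and, Finset.mem_biUnion,
      Finset.mem_powerset, hP]
    rintro ⟨A, hA, h⟩
    refine ⟨A, ⟨hA, ?_, ?_⟩, h⟩ <;>
    · rw [Finset.nonempty_iff_ne_empty]
      intro h0
      simp [cutError, h0] at h
  have hinv : ∑ A ∈ P, x ^ (D \ A).card = ∑ A ∈ P, x ^ A.card := by
    refine Finset.sum_nbij' (D \ ·) (D \ ·) ?_ ?_ ?_ ?_ ?_
    · intro A hA
      simp only [hP, Finset.mem_filter, Finset.mem_powerset] at hA ⊢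
      exact ⟨Finset.sdiff_subset, hA.2.2, by rw [Finset.sdiff_sdiff_eq_self hA.1]; exact hA.2.1⟩
    · intro A hA
      simp only [hP, Finset.mem_filter, Finset.mem_powerset] at hA ⊢
      exact ⟨Finset.sdiff_subset, hA.2.2, by rw [Finset.sdiff_sdiff_eq_self hA.1]; exact hA.2.1⟩
    · intro A hA
      exact Finset.sdiff_sdiff_eq_self (Finset.mem_powerset.1 (Finset.mem_filter.1 hA).1)
    · intro A hA
      exact Finset.sdiff_sdiff_eq_self (Finset.mem_powerset.1 (Finset.mem_filter.1 hA).1)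
    · intro A _
      rfl
  have hPle : ∑ A ∈ P, x ^ A.card ≤ 2 * (D.card * x) := by
    refine (Finset.sum_le_sum_of_subset_of_nonneg ?_ fun _ _ _ => ?_).trans
      (sum_pow_card_nonempty_le D x (Real.exp_nonneg _) hx)
    · intro A
      simp only [hP, Finset.mem_filter]
      tauto
    · exact pow_nonneg (Real.exp_nonneg _) _
  have hstep : ∀ A ∈ P, ((univ.filter fun ω : ∀ u : V, Fin q → {v : V // Cl v = Cl u} =>
        ε * ((A.card : ℝ) * ((D \ A).card : ℝ)) < cutError q G D A ω).card : ℝ) ≤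
      2 * ((x ^ A.card + x ^ (D \ A).card) * N) := by
    intro A hA
    simp only [hP, Finset.mem_filter, Finset.mem_powerset] at hA
    refine (card_cutError_gt_le q hq G Cl i ε hε hε1 A hA.1 hA.2.1).trans ?_
    have hc : (D.card : ℝ) = A.card + (D \ A).card := by
      rw [add_comm]
      exact_mod_cast (Finset.card_sdiff_add_card_eq_card hA.1).symm
    have := exp_cut_le (a := A.card) (b := (D \ A).card) (q := q) rfl rfl
      (by have : (0 : ℝ) < A.card := by exact_mod_cast hA.2.1.card_pos
          positivity) hql hl
    rw [← hc] at this
    gcongr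
  calc _ ≤ ((P.biUnion fun A => univ.filter fun ω : ∀ u : V, Fin q → {v : V // Cl v = Cl u} =>
        ε * ((A.card : ℝ) * ((D \ A).card : ℝ)) < cutError q G D A ω).card : ℝ) :=
        Nat.cast_le.2 (Finset.card_le_card hsub)
    _ ≤ ∑ A ∈ P, ((univ.filter fun ω : ∀ u : V, Fin q → {v : V // Cl v = Cl u} =>
        ε * ((A.card : ℝ) * ((D \ A).card : ℝ)) < cutError q G D A ω).card : ℝ) := by
        exact_mod_cast Finset.card_biUnion_le
    _ ≤ ∑ A ∈ P, 2 * ((x ^ A.card + x ^ (D \ A).card) * N) := Finset.sum_le_sum hstep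
    _ = 2 * ((∑ A ∈ P, x ^ A.card + ∑ A ∈ P, x ^ (D \ A).card) * N) := by
        rw [← Finset.mul_sum, ← Finset.sum_mul, Finset.sum_add_distrib]
    _ ≤ 2 * ((2 * (D.card * x) + 2 * (D.card * x)) * N) := by
        rw [hinv]
        gcongr
    _ = _ := by ring

/-- Union bound over all clusters and all their subsets. -/
lemma card_exists_cluster_cutError_gt_le {V : Type*} [Fintype V] {k : ℕ} (q : ℕ) (hq : 0 < q)
    (G : SimpleGraph V) (Cl : V → Fin k) (ε : ℝ) (hε : 0 < ε) (hε1 : ε < 1)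
    (hn : 2 ≤ Fintype.card V) (hql : 64 * Real.log (Fintype.card V) ≤ ε ^ 2 * q) :
    ((univ.filter fun ω : ∀ u : V, Fin q → {v : V // Cl v = Cl u} =>
        ∃ i, ∃ A ⊆ cluster Cl i, ε * ((A.card : ℝ) * ((cluster Cl i \ A).card : ℝ)) <
          cutError q G (cluster Cl i) A ω).card : ℝ) ≤
      (Fintype.card V : ℝ) ^ (-3 : ℤ) *
        Fintype.card (∀ u : V, Fin q → {v : V // Cl v = Cl u}) := by
  set n : ℝ := ((Fintype.card V : ℕ) : ℝ) with hnn
  have hn2 : (2 : ℝ) ≤ n := by rw [hnn]; exact_mod_cast hn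
  have hn0 : 0 < n := by linarith
  have hx : Real.exp (-(8 * Real.log n)) = (n ^ 8)⁻¹ := by
    rw [Real.exp_neg, show (8 : ℝ) = ((8 : ℕ) : ℝ) by norm_num, Real.exp_nat_mul,
      Real.exp_log hn0]
  have hstep : ∀ i, _ := fun i => card_exists_cutError_gt_le q hq G Cl i ε (Real.log n) hε hε1
    (Real.log_nonneg (by linarith)) hql (by
      rw [hx, ← div_eq_mul_inv, div_le_one (by positivity)]
      have : ((cluster Cl i).card : ℝ) ≤ n := by
        rw [hnn]; exact_mod_cast Finset.card_le_univ _
      exact this.trans (le_self_pow₀ (by linarith) (by norm_num)))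
  have hsum : ∑ i, ((cluster Cl i).card : ℝ) = n := by
    rw [hnn, ← Finset.card_univ, Finset.card_eq_sum_card_fiberwise (t := univ) (f := Cl)
      (fun _ _ => Finset.mem_coe.2 (Finset.mem_univ _))]
    simp [cluster]
  have hsub : (univ.filter fun ω : ∀ u : V, Fin q → {v : V // Cl v = Cl u} =>
        ∃ i, ∃ A ⊆ cluster Cl i, ε * ((A.card : ℝ) * ((cluster Cl i \ A).card : ℝ)) <
          cutError q G (cluster Cl i) A ω) ⊆
      univ.biUnion fun i => univ.filter fun ω : ∀ u : V, Fin q → {v : V // Cl v = Cl u} =>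
        ∃ A ⊆ cluster Cl i, ε * ((A.card : ℝ) * ((cluster Cl i \ A).card : ℝ)) <
          cutError q G (cluster Cl i) A ω := by
    intro ω
    simp
  have hcard : ((_ : ℕ) : ℝ) ≤ _ :=
    Nat.cast_le.2 ((Finset.card_le_card hsub).trans Finset.card_biUnion_le)
  rw [Nat.cast_sum] at hcard
  refine hcard.trans ((Finset.sum_le_sum fun i _ => hstep i).trans ?_)
  rw [← Finset.sum_mul, ← Finset.mul_sum, ← Finset.sum_mul, hsum, hx]
  gcongr
  rw [zpow_neg, zpow_ofNat, ← div_eq_mul_inv, ← mul_div_assoc, div_le_iff₀ (by positivity),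
    ← div_eq_inv_mul, le_div_iff₀ (by positivity)]
  have h4 : (16 : ℝ) ≤ n ^ 4 := by
    calc (16 : ℝ) = 2 ^ 4 := by norm_num
      _ ≤ n ^ 4 := by gcongr
  have : n ^ 8 = n ^ 4 * n ^ 4 := by ring
  nlinarith [pow_pos hn0 4]

/-- Lemma 1 of the paper.  There is a universal constant `c₂ > 0` such
that the following holds.  Let `ε ∈ (0,1)`, `|V| = n ≥ 2`, and let `q` be an integer with
`q ≥ c₂ k² (log n)/ε⁴`.  Fix a pivotal `k`-clustering `C` (assignment `Cl`).  For each
`i ∈ [k]` and `u ∈ C_i`, the sample `S_{ui}` consists of `q` points drawn independently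
and uniformly with replacement from `C_i`; the family of samples is a uniform element `ω`
of `Ω = Π (u : V), Fin q → C_{Cl u}`.  Then with probability at least `1 − n⁻³`,
simultaneously for all `k`-clusterings `C'` and all `i, j ∈ [k]`:
`|F_{i,j}(C') − F̂_{i,j}(C')| ≤ ε·|C_{ij} × (C_i \ C_{ij})|`. -/
theorem stmt14 :
    ∃ c₂ : ℝ, 0 < c₂ ∧
      ∀ (V : Type) [Fintype V] (k q : ℕ) (G : SimpleGraph V) (Cl : V → Fin k) (ε : ℝ),
        0 < ε → ε < 1 → 2 ≤ Fintype.card V →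
        c₂ * (k : ℝ) ^ 2 * Real.log (Fintype.card V) / ε ^ 4 ≤ (q : ℝ) →
        1 - (Fintype.card V : ℝ) ^ (-3 : ℤ) ≤
          ((Finset.univ.filter fun ω : ∀ u : V, Fin q → {v : V // Cl v = Cl u} =>
              ∀ (Cl' : V → Fin k) (i j : Fin k),
                |(∑ u ∈ cluster Cl i ∩ cluster Cl' j,
                      ∑ v ∈ cluster Cl i \ (cluster Cl i ∩ cluster Cl' j),
                        fuv G Cl Cl' u v)
                  - ((cluster Cl i).card : ℝ) / (q : ℝ) *
                      ∑ u ∈ cluster Cl i ∩ cluster Cl' j, ∑ s : Fin q,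
                        if (ω u s).1 ∈ cluster Cl i \ (cluster Cl i ∩ cluster Cl' j) then
                          fuv G Cl Cl' u (ω u s).1
                        else 0|
                ≤ ε * (((cluster Cl i ∩ cluster Cl' j).card : ℝ) *
                    ((cluster Cl i \ (cluster Cl i ∩ cluster Cl' j)).card : ℝ))).card : ℝ)
            / (Fintype.card (∀ u : V, Fin q → {v : V // Cl v = Cl u}) : ℝ) := by
  refine ⟨64, by norm_num, ?_⟩
  intro V _ k q G Cl ε hε hε1 hn hqb
  have hn2 : (2 : ℝ) ≤ Fintype.card V := by exact_mod_cast hn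
  have hlog : 0 < Real.log (Fintype.card V) := Real.log_pos (by linarith)
  have hk : (1 : ℝ) ≤ k := by
    have : Nonempty V := Fintype.card_pos_iff.1 (by omega)
    have := (Cl this.some).pos
    exact_mod_cast this
  have hql : 64 * Real.log (Fintype.card V) ≤ ε ^ 2 * q := by
    rw [div_le_iff₀ (by positivity)] at hqb
    have h1 : 64 * Real.log (Fintype.card V) ≤ 64 * (k : ℝ) ^ 2 * Real.log (Fintype.card V) := by
      nlinarith [mul_le_mul_of_nonneg_right (one_le_pow₀ hk : (1 : ℝ) ≤ (k : ℝ) ^ 2) hlog.le]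
    have h2 : (q : ℝ) * ε ^ 4 ≤ ε ^ 2 * q := by
      rw [mul_comm]
      exact mul_le_mul_of_nonneg_right (pow_le_pow_of_le_one hε.le hε1.le (by norm_num))
        (Nat.cast_nonneg q)
    linarith
  have hq : 0 < q := by
    rcases Nat.eq_zero_or_pos q with rfl | h
    · simp only [Nat.cast_zero, mul_zero] at hql; linarith
    · exact h
  have hbad := card_exists_cluster_cutError_gt_le q hq G Cl ε hε hε1 hn hql
  have : ∀ u : V, Nonempty {v : V // Cl v = Cl u} := fun u => ⟨⟨u, rfl⟩⟩
  have hN : (0 : ℝ) < Fintype.card (∀ u : V, Fin q → {v : V // Cl v = Cl u}) := by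
    exact_mod_cast Fintype.card_pos
  rw [le_div_iff₀ hN, sub_mul, one_mul, sub_le_iff_le_add]
  refine le_trans ?_ (add_le_add_right hbad _)
  rw [← Nat.cast_add, Nat.cast_le, ← Finset.card_univ]
  refine (Finset.card_le_card ?_).trans (Finset.card_union_le _ _)
  intro ω _
  rw [Finset.mem_union, or_iff_not_imp_right]
  intro hω
  simp only [Finset.mem_filter, Finset.mem_univ, true_and, not_exists, not_and, not_lt] at hω ⊢
  intro Cl' i j
  have hA : cluster Cl i ∩ cluster Cl' j ⊆ cluster Cl i := Finset.inter_subset_left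
  refine le_trans (le_of_eq ?_) (hω i _ hA)
  have hf : ∀ u ∈ cluster Cl i ∩ cluster Cl' j,
      ∀ v ∈ cluster Cl i \ (cluster Cl i ∩ cluster Cl' j),
        fuv G Cl Cl' u v = adjSign G u v := by
    intro u hu v hv
    simp only [cluster, Finset.mem_inter, Finset.mem_sdiff, Finset.mem_filter, Finset.mem_univ,
      true_and, not_and] at hu hv
    exact fuv_eq_adjSign G Cl Cl' (hu.1.trans hv.1.symm)
      fun h => hv.2 hv.1 (h.symm.trans hu.2)
  unfold cutError
  congr 2
  · exact Finset.sum_congr rfl fun u hu => Finset.sum_congr rfl fun v hv => hf u hu v hv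
  · congr 1
    refine Finset.sum_congr rfl fun u hu => Finset.sum_congr rfl fun s _ => ?_
    split_ifs with h
    · exact hf u hu _ h
    · rfl
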